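/- The inclusion ℤ → ℚ is not pure as a morphism of ℤ-modules; nevertheless, for every ℚ-vector space M and every ℚ-linear map ρ : M → M ⊗_ℤ ℚ satisfying coassociativity Σ ρ(m_0) ⊗ m_1 = Σ m_0 ⊗ 1 ⊗ m_1 and the counit condition Σ m_0·m_1 = m, one has M^co = M and the counit map ζ_M : M^co ⊗_ℤ ℚ → M, m ⊗ q ↦ m·q, is bijective. -/

import Mathlib

open TensorProduct

universe u

noncomputable def unitMap (B A : Type u) [CommRing B] [CommRing A] [Algebra B A]
    (N : Type u) [AddCommGroup N] [Module B N] : N →ₗ[B] N ⊗[B] A :=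
  (TensorProduct.mk B N A).flip 1

/-- The action map `M ⊗_B A → M`, `m ⊗ a ↦ m · a`. -/
noncomputable def actionMap (B A : Type u) [CommRing B] [CommRing A] [Algebra B A]
    (M : Type u) [AddCommGroup M] [Module B M] [Module A M] [IsScalarTower B A M] :
    M ⊗[B] A →ₗ[B] M :=
  TensorProduct.lift (LinearMap.mk₂ B (fun m a => a • m)
    (fun m m' a => smul_add a m m')
    (fun b m a => smul_comm a b m)
    (fun m a a' => add_smul a a' m)
    (fun b m a => smul_assoc b a m))

/-- `(M, ρ)` is a comodule over the canonical coring `A ⊗_B A`. -/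
def IsCanComodule (B A : Type u) [CommRing B] [CommRing A] [Algebra B A]
    (M : Type u) [AddCommGroup M] [Module B M] [Module A M] [IsScalarTower B A M]
    (ρ : M →ₗ[B] M ⊗[B] A) : Prop :=
  (∀ (a : A) (m : M),
      ρ (a • m) = LinearMap.lTensor M (LinearMap.mulLeft B a) (ρ m)) ∧
  (∀ m : M, LinearMap.rTensor A ρ (ρ m) = LinearMap.rTensor A (unitMap B A M) (ρ m)) ∧
  (∀ m : M, actionMap B A M (ρ m) = m)

/-- The coinvariants `M^co = {m : ρ m = m ⊗ 1}` as a `B`-submodule. -/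
noncomputable def coinv (B A : Type u) [CommRing B] [CommRing A] [Algebra B A]
    (M : Type u) [AddCommGroup M] [Module B M] [Module A M] [IsScalarTower B A M]
    (ρ : M →ₗ[B] M ⊗[B] A) : Submodule B M where
  carrier := {m | ρ m = m ⊗ₜ[B] 1}
  add_mem' := by
    intro x y hx hy
    simp only [Set.mem_setOf_eq] at *
    rw [map_add, hx, hy, add_tmul]
  zero_mem' := by simp
  smul_mem' := by
    intro b m hm
    simp only [Set.mem_setOf_eq] at *
    rw [map_smul, hm, smul_tmul']

/-- The counit map `ζ_M : M^co ⊗_B A → M`, `m ⊗ a ↦ m · a`. -/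
noncomputable def counitMap (B A : Type u) [CommRing B] [CommRing A] [Algebra B A]
    (M : Type u) [AddCommGroup M] [Module B M] [Module A M] [IsScalarTower B A M]
    (ρ : M →ₗ[B] M ⊗[B] A) : (coinv B A M ρ) ⊗[B] A →ₗ[B] M :=
  actionMap B A M ∘ₗ LinearMap.rTensor A (coinv B A M ρ).subtype

/-!
Since `ℤ → ℚ` is a ring epimorphism, multiplication `M ⊗ ℚ → M` is injective for every
`ℚ`-vector space `M`. The counit condition says that `ρ m` and `m ⊗ 1` have the same image
under it, so every element is coinvariant.
Purity fails because a pure epimorphism `B → A` is bijective: in `A ⊗[B] A` one has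
`a ⊗ 1 = 1 ⊗ a`, so the map `A ⧸ B → (A ⧸ B) ⊗[B] A` vanishes.
-/

section Purity

/-- Purity of `B → A` as a morphism of `B`-modules: `N → N ⊗[B] A` is injective for every
`B`-module `N`. The modules range over the universe of `B` and `A`, as in `unitMap`. -/
def IsPureAlgebra (B A : Type u) [CommRing B] [CommRing A] [Algebra B A] : Prop :=
  ∀ (N : Type u) [AddCommGroup N] [Module B N], Function.Injective (unitMap B A N)

variable {B A : Type u} [CommRing B] [CommRing A] [Algebra B A]

theorem algebraMap_injective_of_isPureAlgebra (h : IsPureAlgebra B A) :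
    Function.Injective (algebraMap B A) := by
  have lid_unitMap : TensorProduct.lid B A ∘ unitMap B A B = algebraMap B A := by
    ext b
    exact (Algebra.algebraMap_eq_smul_one b).symm
  rw [← lid_unitMap]
  exact (TensorProduct.lid B A).injective.comp (h B)

theorem unitMap_quotient_range_eq_zero [Algebra.IsEpi B A] :
    unitMap B A (A ⧸ LinearMap.range (Algebra.linearMap B A)) = 0 := by
  set π := (LinearMap.range (Algebra.linearMap B A)).mkQ
  have π_one : π 1 = 0 :=
    (Submodule.Quotient.mk_eq_zero _).mpr ⟨1, map_one (algebraMap B A)⟩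
  refine Submodule.linearMap_qext _ (LinearMap.ext fun a ↦ ?_)
  calc π a ⊗ₜ[B] (1 : A) = π.rTensor A (a ⊗ₜ 1) := rfl
    _ = π.rTensor A (1 ⊗ₜ a) := by rw [Algebra.tmul_comm B a 1]
    _ = 0 := by rw [LinearMap.rTensor_tmul, π_one, zero_tmul]

theorem algebraMap_surjective_of_isPureAlgebra [Algebra.IsEpi B A] (h : IsPureAlgebra B A) :
    Function.Surjective (algebraMap B A) := by
  have quotient_subsingleton : Subsingleton (A ⧸ LinearMap.range (Algebra.linearMap B A)) :=
    ⟨fun x y ↦ h _ (by simp only [unitMap_quotient_range_eq_zero, LinearMap.zero_apply])⟩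
  rwa [Submodule.Quotient.subsingleton_iff, LinearMap.range_eq_top] at quotient_subsingleton

end Purity

section Descent

variable {B A : Type u} [CommRing B] [CommRing A] [Algebra B A]
  {M : Type u} [AddCommGroup M] [Module B M] [Module A M] [IsScalarTower B A M]

theorem actionMap_tmul (m : M) (a : A) : actionMap B A M (m ⊗ₜ a) = a • m := rfl

theorem actionMap_bijective [Algebra.IsEpi B A] : Function.Bijective (actionMap B A M) := by
  have actionMap_eq : actionMap B A M =
      (TensorProduct.comm B M A ≪≫ₗ
        (TensorProduct.lid' B A M).restrictScalars B).toLinearMap :=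
    TensorProduct.ext' fun _ _ ↦ rfl
  rw [actionMap_eq]
  exact LinearEquiv.bijective _

theorem coinv_eq_top_of_counital [Algebra.IsEpi B A] {ρ : M →ₗ[B] M ⊗[B] A}
    (hρ : ∀ m, actionMap B A M (ρ m) = m) : coinv B A M ρ = ⊤ :=
  Submodule.eq_top_iff'.mpr fun m ↦ actionMap_bijective.injective <| by
    rw [hρ, actionMap_tmul, one_smul]

theorem counitMap_bijective_of_coinv_eq_top [Algebra.IsEpi B A] {ρ : M →ₗ[B] M ⊗[B] A}
    (h : coinv B A M ρ = ⊤) : Function.Bijective (counitMap B A M ρ) :=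
  actionMap_bijective.comp ((LinearEquiv.ofTop _ h).rTensor A).bijective

end Descent

theorem int_rat_not_pure_but_descent_general (B A : Type u) [CommRing B] [CommRing A]
    [Algebra B A] [Algebra.IsEpi B A] (hBA : ¬ Function.Bijective (algebraMap B A)) :
    ¬ IsPureAlgebra B A ∧
    ∀ (M : Type u) [AddCommGroup M] [Module B M] [Module A M] [IsScalarTower B A M]
      (ρ : M →ₗ[B] M ⊗[B] A), (∀ m, actionMap B A M (ρ m) = m) →
      coinv B A M ρ = ⊤ ∧ Function.Bijective (counitMap B A M ρ) := by
  refine ⟨fun hpure ↦ hBA ?_, fun M _ _ _ _ ρ hρ ↦ ?_⟩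
  · exact ⟨algebraMap_injective_of_isPureAlgebra hpure,
      algebraMap_surjective_of_isPureAlgebra hpure⟩
  · have htop : coinv B A M ρ = ⊤ := coinv_eq_top_of_counital hρ
    exact ⟨htop, counitMap_bijective_of_coinv_eq_top htop⟩

theorem algebraMap_int_rat_not_surjective : ¬ Function.Surjective (algebraMap ℤ ℚ) :=
  IsFractionRing.surjective_iff_isField.not.mpr Int.not_isField

/-- The inclusion `ℤ → ℚ` is not pure as a morphism of `ℤ`-modules; nevertheless, for
every `ℚ`-vector space `M` with a coassociative counital coaction
`ρ : M → M ⊗_ℤ ℚ`, the coinvariants are all of `M` and the counit map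
`ζ_M : M^co ⊗_ℤ ℚ → M` is bijective. -/
theorem int_rat_not_pure_but_descent :
    (¬ ∀ (N : Type) [AddCommGroup N] [Module ℤ N],
        Function.Injective (unitMap ℤ ℚ N)) ∧
    (∀ (M : Type) [AddCommGroup M] [Module ℚ M] (ρ : M →ₗ[ℤ] M ⊗[ℤ] ℚ),
        IsCanComodule ℤ ℚ M ρ →
        (coinv ℤ ℚ M ρ = ⊤ ∧ Function.Bijective (counitMap ℤ ℚ M ρ))) := by
  obtain ⟨not_pure, descent⟩ := int_rat_not_pure_but_descent_general ℤ ℚ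
    fun h ↦ algebraMap_int_rat_not_surjective h.surjective
  exact ⟨not_pure, fun M _ _ ρ hρ ↦ descent M ρ hρ.2.2⟩
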